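/- For i ∈ {0,1} let ℓ_i(v) = i·log Φ(v) + (1-i)·log Φ(-v) and let ℓ_i'' denote its second derivative. Then for every u ∈ ℝ, the expected Hessian of the probit log-likelihood at the truth satisfies Φ(u)·ℓ_1''(u) + (1 - Φ(u))·ℓ_0''(u) = -φ(u)²/(Φ(u)Φ(-u)). -/

import Mathlib

/-!
Since `Φ' = φ`, `φ'(t) = -t φ(t)` and `0 < Φ`, the quotient rule gives
`ℓ₁'' = (-u φ Φ(u) - φ²) / Φ(u)²` and `ℓ₀'' = (u φ Φ(-u) - φ²) / Φ(-u)²`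
(`iteratedDeriv_two_probitLL_one`, `iteratedDeriv_two_probitLL_zero`). Weighted by `Φ(u)` and
`1 - Φ(u) = Φ(-u)` (`Phi_neg`, from the symmetry of `φ` and its total mass `1`), the terms `∓u φ`
cancel, leaving `-φ² (1 / Φ(u) + 1 / Φ(-u)) = -φ² / (Φ(u) Φ(-u))`,
because `Φ(u) + Φ(-u) = 1`.
-/

open Real MeasureTheory

/-- Standard normal density. -/
noncomputable def phi (t : ℝ) : ℝ := (Real.sqrt (2 * Real.pi))⁻¹ * Real.exp (-(t ^ 2) / 2)

/-- Standard normal CDF. -/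
noncomputable def Phi (u : ℝ) : ℝ := ∫ t in Set.Iic u, phi t

/-- Standard bivariate normal density with correlation ρ. -/
noncomputable def phi2 (s t ρ : ℝ) : ℝ :=
  (2 * Real.pi * Real.sqrt (1 - ρ ^ 2))⁻¹ *
    Real.exp (-(s ^ 2 - 2 * ρ * s * t + t ^ 2) / (2 * (1 - ρ ^ 2)))

/-- Standard bivariate normal CDF with correlation ρ. -/
noncomputable def Phi2 (u v ρ : ℝ) : ℝ :=
  ∫ s in Set.Iic u, ∫ t in Set.Iic v, phi2 s t ρ

/-- Probit log-likelihood with outcome i. -/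
noncomputable def probitLL (i v : ℝ) : ℝ := i * Real.log (Phi v) + (1 - i) * Real.log (Phi (-v))

lemma phi_eq_gaussianPDFReal : phi = ProbabilityTheory.gaussianPDFReal 0 1 := by
  funext t
  simp [phi, ProbabilityTheory.gaussianPDFReal]

lemma phi_pos (t : ℝ) : 0 < phi t := by
  unfold phi
  positivity

lemma phi_neg (t : ℝ) : phi (-t) = phi t := by simp [phi]

lemma continuous_phi : Continuous phi := by
  unfold phi
  fun_prop

lemma integrable_phi : Integrable phi := by
  rw [phi_eq_gaussianPDFReal]
  exact ProbabilityTheory.integrable_gaussianPDFReal 0 1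

lemma integral_phi : ∫ t, phi t = 1 := by
  rw [phi_eq_gaussianPDFReal]
  exact ProbabilityTheory.integral_gaussianPDFReal_eq_one 0 one_ne_zero

lemma hasDerivAt_phi (t : ℝ) : HasDerivAt phi (-t * phi t) t := by
  have h : HasDerivAt (fun x : ℝ => -(x ^ 2) / 2) (-t) t := by
    refine ((hasDerivAt_pow 2 t).fun_neg.div_const 2).congr_deriv ?_
    norm_num
    ring
  refine (h.exp.const_mul ((Real.sqrt (2 * Real.pi))⁻¹)).congr_deriv ?_
  unfold phi
  ring

/-- The improper integral defining `Phi` differs by a constant from the interval integral based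
at `0`, to which the fundamental theorem of calculus applies. -/
lemma hasDerivAt_Phi (u : ℝ) : HasDerivAt Phi (phi u) u := by
  have h : Phi = fun x => Phi 0 + ∫ t in (0 : ℝ)..x, phi t := by
    funext x
    rw [intervalIntegral.integral_Iic_sub_Iic integrable_phi.integrableOn
      integrable_phi.integrableOn |>.symm]
    simp [Phi]
  rw [h]
  exact (continuous_phi.integral_hasStrictDerivAt 0 u).hasDerivAt.const_add _

lemma Phi_pos (u : ℝ) : 0 < Phi u := by
  unfold Phi
  rw [setIntegral_pos_iff_support_of_nonneg_ae
    (Filter.Eventually.of_forall fun t => (phi_pos t).le) integrable_phi.integrableOn]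
  have h : Function.support phi = Set.univ :=
    Set.eq_univ_of_forall fun t => (phi_pos t).ne'
  simp [h]

lemma Phi_neg (u : ℝ) : Phi (-u) = 1 - Phi u := by
  have h : Phi (-u) = ∫ t in Set.Ioi u, phi t := by
    have := integral_comp_neg_Ioi u phi
    simp only [phi_neg] at this
    exact this.symm
  rw [h, eq_sub_iff_add_eq', ← integral_phi]
  exact intervalIntegral.integral_Iic_add_Ioi integrable_phi.integrableOn
    integrable_phi.integrableOn

lemma hasDerivAt_Phi_neg (u : ℝ) : HasDerivAt (fun v => Phi (-v)) (-phi u) u := by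
  refine ((hasDerivAt_Phi (-u)).comp u (hasDerivAt_neg u)).congr_deriv ?_
  rw [phi_neg, mul_neg_one]

lemma iteratedDeriv_two_probitLL_one (u : ℝ) :
    iteratedDeriv 2 (probitLL 1) u = (-u * phi u * Phi u - phi u ^ 2) / Phi u ^ 2 := by
  have h : deriv (probitLL 1) = fun v => phi v / Phi v := by
    funext v
    have e : probitLL 1 = fun x => Real.log (Phi x) := by
      funext x
      simp [probitLL]
    rw [e]
    exact ((hasDerivAt_Phi v).log (Phi_pos v).ne').deriv
  rw [iteratedDeriv_succ, iteratedDeriv_one, h]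
  rw [((hasDerivAt_phi u).fun_div (hasDerivAt_Phi u) (Phi_pos u).ne').deriv]
  ring

lemma iteratedDeriv_two_probitLL_zero (u : ℝ) :
    iteratedDeriv 2 (probitLL 0) u = (u * phi u * Phi (-u) - phi u ^ 2) / Phi (-u) ^ 2 := by
  have h : deriv (probitLL 0) = fun v => -phi v / Phi (-v) := by
    funext v
    have e : probitLL 0 = fun x => Real.log (Phi (-x)) := by
      funext x
      simp [probitLL]
    rw [e]
    exact ((hasDerivAt_Phi_neg v).log (Phi_pos (-v)).ne').deriv
  rw [iteratedDeriv_succ, iteratedDeriv_one, h]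
  rw [((hasDerivAt_phi u).fun_neg.fun_div (hasDerivAt_Phi_neg u) (Phi_pos (-u)).ne').deriv]
  ring

/-- Information-matrix identity for probit: the expected Hessian of the probit
log-likelihood at the truth equals -φ(u)²/(Φ(u)Φ(-u)). -/
theorem probit_expected_hessian (u : ℝ) :
    Phi u * iteratedDeriv 2 (probitLL 1) u + (1 - Phi u) * iteratedDeriv 2 (probitLL 0) u
      = -(phi u ^ 2) / (Phi u * Phi (-u)) := by
  have hp := (Phi_pos u).ne'
  have hn := (Phi_pos (-u)).ne'
  have hs : Phi u = 1 - Phi (-u) := by rw [Phi_neg]; ring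
  rw [iteratedDeriv_two_probitLL_one, iteratedDeriv_two_probitLL_zero, ← Phi_neg]
  field_simp
  rw [hs]
  ring
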